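/- Let K be an algebraically closed field of characteristic 0 and m≥2. The unique lifted reciprocity map h on the rational function field K(t) satisfies h(t∧(1−t)∧(1−a/t)∧c₄∧…∧c_{m+1}) = −{a}₂⊗(c₄∧…∧c_{m+1}) mod D_m for every a∈Kˣ and all c₄,…,c_{m+1}∈Kˣ. -/

import Mathlib

/-!
The identity is a consequence of the first condition defining a lifted reciprocity map alone:
`t ∧ (1 - t) ∧ (1 - a/t) ∧ c₄ ∧ …` is by definition `δ({t}₂ ⊗ b)` with
`b = (1 - a/t) ∧ c₄ ∧ …`, so `h` takes it to the class of `∑_ν ∂_ν^B({t}₂ ⊗ b)`. As the `c_i` are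
constants, `∂_ν b = ν(1 - a/t) · c₄ ∧ …`, and the summand at `ν` is
`-ν(1 - a/t) · {res_ν t}₂ ⊗ c₄ ∧ …`. It vanishes when `t` has a zero or a pole at `ν`, because
`{0}₂ = 0` and `res_ν` is zero outside the valuation ring. Otherwise
`ν(1 - a/t) = ν(t - a)` is nonzero only when `ν` is the valuation at `t = a`, where it equals `1`
and `res_ν t = a`. That this valuation exists and is the only one at which `t - a` vanishes is
`pointVal` and `KDVF.eq_of_red`.

That condition quantifies over realizations of `δ`, `∂_ν` and `∂_ν^B`, so it only yields information once
these maps are shown to exist (`exists_delta`, `exists_tame`, `exists_tameB`). The tame symbol is a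
contraction in the exterior algebra followed by an angular component map. For the two maps out of
`B₂`, five distinct points are moved to `(∞, 0, 1, x, y)` (`crP_param`), so that one has to check the
five-term relation in `x` and `y` only (`B2_exists_lift`). For `∂_ν^B` this says that the five-term
relation over `F` specializes to a consequence of the one over the residue field
(`DVF.fiveTerm_spec`): if the reductions of the five points collide, the relation degenerates to
instances of `{x⁻¹}₂ = -{x}₂` and `{1 - x}₂ = -{x}₂`, which are themselves deduced from the five-term
relation (`B2sym_inv`, `B2sym_one_sub`).
-/

open scoped TensorProduct

set_option maxHeartbeats 1000000
set_option synthInstance.maxHeartbeats 1000000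

noncomputable section

/-! ## The ℚ-vector space `G ⊗ ℚ` attached to a multiplicative abelian group `G`,
and its exterior powers `Λ^n(G)`. -/

/-- `G ⊗_ℤ ℚ` for a multiplicative abelian group `G`. -/
abbrev QW (G : Type*) [CommGroup G] : Type _ := ℚ ⊗[ℤ] (Additive G)

/-- The image of `g : G` in `G ⊗ ℚ`. -/
def toQ {G : Type*} [CommGroup G] (g : G) : QW G :=
  (1 : ℚ) ⊗ₜ[ℤ] (Additive.ofMul g)

open Classical in
/-- The image of a nonzero field element in `Eˣ ⊗ ℚ` (zero is sent to zero). -/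
def toQF {E : Type*} [Field E] (x : E) : QW Eˣ :=
  if h : x = 0 then 0 else toQ (Units.mk0 x h)

/-- `Λ^n(G)`: the `n`-th exterior power over `ℚ` of `G ⊗ ℚ`. -/
def Lambda (n : ℕ) (G : Type*) [CommGroup G] : Type _ := ⋀[ℚ]^n (QW G)

instance (n : ℕ) (G : Type*) [CommGroup G] : AddCommGroup (Lambda n G) :=
  inferInstanceAs (AddCommGroup (⋀[ℚ]^n (QW G)))

instance (n : ℕ) (G : Type*) [CommGroup G] : Module ℚ (Lambda n G) :=
  inferInstanceAs (Module ℚ (⋀[ℚ]^n (QW G)))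

/-- The underlying element of the ambient exterior algebra of `Λ^n(G)`. -/
def Lambda.amb {n : ℕ} {G : Type*} [CommGroup G] (x : Lambda n G) :
    ExteriorAlgebra ℚ (QW G) :=
  Subtype.val x

/-- Wedge `x₁ ∧ … ∧ x_n` of field elements, in the ambient exterior algebra of `Eˣ ⊗ ℚ`. -/
def fw {E : Type*} [Field E] {n : ℕ} (v : Fin n → E) : ExteriorAlgebra ℚ (QW Eˣ) :=
  ExteriorAlgebra.ιMulti ℚ n fun i => toQF (v i)

/-- Wedge `x₁ ∧ … ∧ x_n` of field elements, as an element of `Λ^n(Eˣ)`. -/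
def wedge {E : Type*} [Field E] {n : ℕ} (v : Fin n → E) : Lambda n Eˣ :=
  ⟨fw v, ExteriorAlgebra.ιMulti_range ℚ n (Set.mem_range_self _)⟩

/-- The map `ExteriorAlgebra(G ⊗ ℚ) → ExteriorAlgebra(G' ⊗ ℚ)` induced by a homomorphism
`f : G →* G'`; it restricts to the functorial map `Λ^n(G) → Λ^n(G')` in each degree. -/
def lamMap {G G' : Type*} [CommGroup G] [CommGroup G'] (f : G →* G') :
    ExteriorAlgebra ℚ (QW G) →ₐ[ℚ] ExteriorAlgebra ℚ (QW G') :=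
  ExteriorAlgebra.map (LinearMap.baseChange ℚ (MonoidHom.toAdditive f).toIntLinearMap)

/-! ## The group `B₂(E)` and the five-term relations. -/

/-- The cross-ratio of four points of `P¹(E) = E ∪ {∞}` (`∞ = none`), with value in `E`:
for pairwise distinct arguments at most one argument is `∞`, and the value is the usual
cross-ratio `((z₁−z₃)(z₂−z₄))/((z₁−z₄)(z₂−z₃))`, extended to `∞` in the usual way. -/
def crP {E : Type*} [Field E] : Option E → Option E → Option E → Option E → E
  | some z₁, some z₂, some z₃, some z₄ => ((z₁ - z₃) * (z₂ - z₄)) / ((z₁ - z₄) * (z₂ - z₃))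
  | none, some z₂, some z₃, some z₄ => (z₂ - z₄) / (z₂ - z₃)
  | some z₁, none, some z₃, some z₄ => (z₁ - z₃) / (z₁ - z₄)
  | some z₁, some z₂, none, some z₄ => (z₂ - z₄) / (z₁ - z₄)
  | some z₁, some z₂, some z₃, none => (z₁ - z₃) / (z₂ - z₃)
  | _, _, _, _ => 0

/-- The subspace of relations defining `B₂(E)`: spanned by `{0}₂`, `{1}₂`, `{∞}₂` and the
five-term elements `Σᵢ (−1)ⁱ {cr(z₁,…,ẑᵢ,…,z₅)}₂` for pairwise distinct `z₁,…,z₅ ∈ P¹(E)`. -/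
def fiveTermRel (E : Type*) [Field E] : Submodule ℚ (Option E →₀ ℚ) :=
  Submodule.span ℚ
    ({Finsupp.single (some 0) 1, Finsupp.single (some 1) 1, Finsupp.single none 1} ∪
      {x | ∃ z : Fin 5 → Option E, (∀ i j, i ≠ j → z i ≠ z j) ∧
        x = ∑ i : Fin 5, (-1 : ℚ) ^ (i : ℕ) •
          Finsupp.single (some (crP (z (i.succAbove 0)) (z (i.succAbove 1))
            (z (i.succAbove 2)) (z (i.succAbove 3)))) 1})

/-- `B₂(E)`: the ℚ-vector space with basis `{x}₂`, `x ∈ P¹(E)`, modulo `{0}₂`, `{1}₂`,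
`{∞}₂` and the five-term relations. -/
def B2 (E : Type*) [Field E] : Type _ := (Option E →₀ ℚ) ⧸ fiveTermRel E

instance (E : Type*) [Field E] : AddCommGroup (B2 E) :=
  inferInstanceAs (AddCommGroup ((Option E →₀ ℚ) ⧸ fiveTermRel E))

instance (E : Type*) [Field E] : Module ℚ (B2 E) :=
  inferInstanceAs (Module ℚ ((Option E →₀ ℚ) ⧸ fiveTermRel E))

/-- The class `{x}₂ ∈ B₂(E)` of `x ∈ E`. -/
def B2sym {E : Type*} [Field E] (x : E) : B2 E :=
  Submodule.Quotient.mk (Finsupp.single (some x) 1)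

/-! ## Discrete valuation fields, with a chosen realization `K` of the residue field. -/

/-- A discrete valuation `ν` on a field `F`, together with a realization of its residue
field as a field `K`: `v` is a surjective homomorphism `Fˣ → ℤ` satisfying the ultrametric
inequality, and `res : F → K` realizes `K` as the residue field `O_ν/m_ν` (by convention
`res` is normalized to vanish outside of `O_ν`, so that this data is rigid). -/
structure DVF (F K : Type*) [Field F] [Field K] where
  v : Fˣ → ℤ
  v_mul : ∀ x y : Fˣ, v (x * y) = v x + v y
  v_surj : Function.Surjective v
  v_min : ∀ x y z : Fˣ, (z : F) = (x : F) + (y : F) → min (v x) (v y) ≤ v z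
  res : F → K
  res_zero : res 0 = 0
  res_one : res 1 = 1
  res_add : ∀ x y : Fˣ, 0 ≤ v x → 0 ≤ v y → res ((x : F) + (y : F)) = res (x : F) + res (y : F)
  res_mul : ∀ x y : Fˣ, 0 ≤ v x → 0 ≤ v y → res ((x : F) * (y : F)) = res (x : F) * res (y : F)
  res_vanish : ∀ x : Fˣ, 0 < v x → res (x : F) = 0
  res_unit : ∀ x : Fˣ, v x = 0 → res (x : F) ≠ 0
  res_junk : ∀ x : Fˣ, v x < 0 → res (x : F) = 0
  res_surj : ∀ c : K, c ≠ 0 → ∃ x : Fˣ, v x = 0 ∧ res (x : F) = c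

/-- `D` is *the* tame symbol `∂_ν : Λ^{n+1}(Fˣ) → Λ^n(Kˣ)` of the discrete valuation `w`:
it is ℚ-linear and `∂_ν(x ∧ u₂ ∧ … ∧ u_{n+1}) = ν(x)·(ū₂ ∧ … ∧ ū_{n+1})` whenever
`u₂, …, u_{n+1}` are units (for `n = 0` this reads `∂_ν(x) = ν(x) ∈ ℚ = Λ^0(Kˣ)`). -/
def IsTameSymbol {F K : Type*} [Field F] [Field K] (w : DVF F K) (n : ℕ)
    (D : Lambda (n+1) Fˣ →ₗ[ℚ] Lambda n Kˣ) : Prop :=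
  ∀ (x : Fˣ) (u : Fin n → Fˣ), (∀ i, w.v (u i) = 0) →
    D (wedge (Fin.cons (x : F) (fun i => (u i : F)))) =
      (w.v x : ℚ) • wedge (fun i => w.res (u i : F))

/-- `DB` is *the* tame symbol `∂_ν^B : B₂(F)⊗Λ^{n+1}(Fˣ) → B₂(K)⊗Λ^n(Kˣ)` on the
polylogarithmic side, relative to the tame symbol `D = ∂_ν : Λ^{n+1}(Fˣ) → Λ^n(Kˣ)`:
`∂_ν^B({a}₂⊗b) = 0` when `ν(a) ≠ 0`, and `∂_ν^B({u}₂⊗b) = −{ū}₂⊗∂_ν(b)` for `u` a unit. -/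
def IsTameSymbolB {F K : Type*} [Field F] [Field K] (w : DVF F K) (n : ℕ)
    (D : Lambda (n+1) Fˣ →ₗ[ℚ] Lambda n Kˣ)
    (DB : (B2 F ⊗[ℚ] Lambda (n+1) Fˣ) →ₗ[ℚ] (B2 K ⊗[ℚ] Lambda n Kˣ)) : Prop :=
  (∀ a : Fˣ, (a : F) ≠ 1 → w.v a ≠ 0 → ∀ b : Lambda (n+1) Fˣ,
      DB (B2sym (a : F) ⊗ₜ b) = 0) ∧
  (∀ u : Fˣ, w.v u = 0 → ∀ b : Lambda (n+1) Fˣ,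
      DB (B2sym (u : F) ⊗ₜ b) = - (B2sym (w.res (u : F)) ⊗ₜ D b))

/-- `δ` is *the* differential `δ_{n+2} : B₂(E)⊗Λ^n(Eˣ) → Λ^{n+2}(Eˣ)` of the
polylogarithmic complex: `δ({x}₂ ⊗ w) = x ∧ (1−x) ∧ w` for `x ∈ E∖{0,1}`. -/
def IsDelta (E : Type*) [Field E] (n : ℕ)
    (δ : (B2 E ⊗[ℚ] Lambda n Eˣ) →ₗ[ℚ] Lambda (n+2) Eˣ) : Prop :=
  ∀ x : E, x ≠ 0 → x ≠ 1 → ∀ b : Lambda n Eˣ,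
    (δ (B2sym x ⊗ₜ b)).amb = fw ![x, 1 - x] * b.amb

/-- The subspace `D_m ⊆ B₂(K)⊗Λ^{m−2}(Kˣ)` (here `n = m−2`): the ℚ-span of the elements
`{x}₂ ⊗ (x ∧ w)` with `x ∈ K∖{0,1}` and `w ∈ Λ^{m−3}(Kˣ)`; it is `0` when `m = 2`. -/
def Dspan (K : Type*) [Field K] : (n : ℕ) → Submodule ℚ (B2 K ⊗[ℚ] Lambda n Kˣ)
  | 0 => ⊥
  | (n+1) => Submodule.span ℚ
      {z | ∃ x : K, x ≠ 0 ∧ x ≠ 1 ∧ ∃ y : Lambda (n+1) Kˣ,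
        (∃ w ∈ ⋀[ℚ]^n (QW Kˣ), y.amb = fw ![x] * w) ∧ z = B2sym x ⊗ₜ y}

/-- A discrete valuation (with residue field realized as `k`) on a field `L` over `K`,
trivial on `K` and inducing on `K ⊆ O_ν` the canonical copy of `K` inside `k`. -/
structure KDVF (K L k : Type*) [Field K] [Field L] [Field k] [Algebra K L] [Algebra K k]
    extends DVF L k where
  v_triv : ∀ (c : K) (u : Lˣ), (u : L) = algebraMap K L c → v u = 0
  res_alg : ∀ c : K, res (algebraMap K L c) = algebraMap K k c

/-- `F` is a one-dimensional field over `K`: finitely generated of transcendence degree 1. -/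
def IsOneDim (K F : Type*) [Field K] [Field F] [Algebra K F] : Prop :=
  (∃ s : Finset F, IntermediateField.adjoin K (s : Set F) = ⊤) ∧
  ∃ t : F, Transcendental K t ∧
    Algebra.IsAlgebraic (IntermediateField.adjoin K ({t} : Set F)) F

/-- `L` is a two-dimensional field over `K`: finitely generated of transcendence degree 2. -/
def IsTwoDim (K L : Type*) [Field K] [Field L] [Algebra K L] : Prop :=
  (∃ s : Finset L, IntermediateField.adjoin K (s : Set L) = ⊤) ∧
  ∃ t : Fin 2 → L, AlgebraicIndependent K t ∧
    Algebra.IsAlgebraic (IntermediateField.adjoin K (Set.range t)) L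

universe u

/-- The data of a divisorial valuation on a field `L` over `K`: a residue field `k` which is
one-dimensional over `K`, together with a discrete valuation of `L` over `K` with residue
field `k`. -/
structure DValData (K L : Type u) [Field K] [Field L] [Algebra K L] : Type (u+1) where
  k : Type u
  [fieldk : Field k]
  [algk : Algebra K k]
  w : KDVF K L k
  onedim : IsOneDim K k

attribute [instance] DValData.fieldk DValData.algk

/-- `vf : Lˣ → ℤ` is a divisorial valuation of `L` over `K` (an element of `dval(L)`):
a discrete valuation trivial on `K` whose residue field is one-dimensional over `K`. -/
def IsDVal (K L : Type u) [Field K] [Field L] [Algebra K L] (vf : Lˣ → ℤ) : Prop :=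
  ∃ d : DValData K L, d.w.v = vf

/-- The set `dval(L)` of divisorial valuations of `L` over `K`, as a type. -/
def DVal (K L : Type u) [Field K] [Field L] [Algebra K L] : Type u :=
  {vf : Lˣ → ℤ // IsDVal K L vf}

/-- `h` is a lifted reciprocity map (in weight `m = n+2 ≥ 2`) on the one-dimensional field
`F` over `K`.  The set `val(F)` of discrete valuations of `F` trivial on `K` (whose residue
fields are the finite extension `K` of `K`) is the type `KDVF K F K`; the maps `∂_ν`, `∂_ν^B`
and `δ` are specified through their characteristic predicates, as they are unique. -/
def IsLiftedRec (K F : Type*) [Field K] [Field F] [Algebra K F] (n : ℕ)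
    (h : Lambda (n+3) Fˣ →ₗ[ℚ] ((B2 K ⊗[ℚ] Lambda n Kˣ) ⧸ Dspan K n)) : Prop :=
  -- (i)  h(δ_{m+1}(α)) = Tot_F(α) mod D_m
  (∀ (δF : (B2 F ⊗[ℚ] Lambda (n+1) Fˣ) →ₗ[ℚ] Lambda (n+3) Fˣ), IsDelta F (n+1) δF →
    ∀ (D : (ν : KDVF K F K) → (Lambda (n+1) Fˣ →ₗ[ℚ] Lambda n Kˣ)),
      (∀ ν, IsTameSymbol ν.toDVF n (D ν)) →
    ∀ (DB : (ν : KDVF K F K) →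
        ((B2 F ⊗[ℚ] Lambda (n+1) Fˣ) →ₗ[ℚ] (B2 K ⊗[ℚ] Lambda n Kˣ))),
      (∀ ν, IsTameSymbolB ν.toDVF n (D ν) (DB ν)) →
    ∀ α : B2 F ⊗[ℚ] Lambda (n+1) Fˣ,
      h (δF α) = Submodule.Quotient.mk (∑ᶠ ν : KDVF K F K, DB ν α)) ∧
  -- (ii)  δ_m(h(b)) = −Tot_F(b)
  (∀ (δK : (B2 K ⊗[ℚ] Lambda n Kˣ) →ₗ[ℚ] Lambda (n+2) Kˣ), IsDelta K n δK →
    ∀ (D : (ν : KDVF K F K) → (Lambda (n+3) Fˣ →ₗ[ℚ] Lambda (n+2) Kˣ)),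
      (∀ ν, IsTameSymbol ν.toDVF (n+2) (D ν)) →
    ∀ b : Lambda (n+3) Fˣ, ∀ y : B2 K ⊗[ℚ] Lambda n Kˣ,
      Submodule.Quotient.mk y = h b → δK y = - ∑ᶠ ν : KDVF K F K, D ν b) ∧
  -- (iii)  h(f₁ ∧ f₂ ∧ c₃ ∧ … ∧ c_{m+1}) = 0
  (∀ (f₁ f₂ : Fˣ) (c : Fin (n+1) → Kˣ),
    h (wedge (Fin.cons (f₁ : F) (Fin.cons (f₂ : F)
      (fun i => algebraMap K F (c i : K))))) = 0)

end

/-! ### Five points on the projective line -/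

section CrossRatio

variable {E : Type*} [Field E]

/-- The bracket `[p q]` of two points of `P¹(E)`: the determinant of their homogeneous
coordinates, `z` being represented by `(z, 1)` and `∞` by `(1, 0)`. -/
def bracket : Option E → Option E → E
  | some z, some w => z - w
  | none, some _ => 1
  | some _, none => -1
  | none, none => 0

lemma bracket_ne_zero {p q : Option E} (h : p ≠ q) : bracket p q ≠ 0 := by
  rcases p with _ | p <;> rcases q with _ | q <;> simp [bracket] at h ⊢
  exact sub_ne_zero.2 h

lemma bracket_plucker (p q r s : Option E) :
    bracket p q * bracket r s - bracket p r * bracket q s + bracket p s * bracket q r = 0 := by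
  rcases p with _ | p <;> rcases q with _ | q <;> rcases r with _ | r <;>
    rcases s with _ | s <;> simp only [bracket] <;> ring

lemma crP_eq_bracket {p q r s : Option E} (hpq : p ≠ q) (hpr : p ≠ r) (hps : p ≠ s)
    (hqr : q ≠ r) (hqs : q ≠ s) (hrs : r ≠ s) :
    crP p q r s = bracket p r * bracket q s / (bracket p s * bracket q r) := by
  rcases p with _ | p <;> rcases q with _ | q <;> rcases r with _ | r <;>
    rcases s with _ | s <;>
    first
    | exact absurd rfl hpq | exact absurd rfl hpr | exact absurd rfl hps
    | exact absurd rfl hqr | exact absurd rfl hqs | exact absurd rfl hrs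
    | simp only [crP, bracket, one_mul, mul_one, neg_mul, mul_neg, neg_div_neg_eq]

/-- Five distinct points may be moved to `(∞, 0, 1, x, y)` by a projective transformation;
the five cross-ratios of the configuration are expressed in terms of `x` and `y`. -/
lemma crP_param (z0 z1 z2 z3 z4 : Option E)
    (h01 : z0 ≠ z1) (h02 : z0 ≠ z2) (h03 : z0 ≠ z3) (h04 : z0 ≠ z4)
    (h12 : z1 ≠ z2) (h13 : z1 ≠ z3) (h14 : z1 ≠ z4)
    (h23 : z2 ≠ z3) (h24 : z2 ≠ z4) (h34 : z3 ≠ z4) :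
    ∃ x y : E, x ≠ 0 ∧ x ≠ 1 ∧ y ≠ 0 ∧ y ≠ 1 ∧ x ≠ y ∧
      crP z1 z2 z3 z4 = x * (1 - y) / (y * (1 - x)) ∧
      crP z0 z2 z3 z4 = (1 - y) / (1 - x) ∧
      crP z0 z1 z3 z4 = y / x ∧ crP z0 z1 z2 z4 = y ∧ crP z0 z1 z2 z3 = x := by
  rw [crP_eq_bracket h12 h13 h14 h23 h24 h34, crP_eq_bracket h02 h03 h04 h23 h24 h34,
    crP_eq_bracket h01 h03 h04 h13 h14 h34, crP_eq_bracket h01 h02 h04 h12 h14 h24,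
    crP_eq_bracket h01 h02 h03 h12 h13 h23]
  have p1 := bracket_plucker z0 z1 z2 z3
  have p2 := bracket_plucker z0 z1 z2 z4
  have p3 := bracket_plucker z0 z1 z3 z4
  have n01 := bracket_ne_zero h01
  have n02 := bracket_ne_zero h02
  have n03 := bracket_ne_zero h03
  have n04 := bracket_ne_zero h04
  have n12 := bracket_ne_zero h12
  have n13 := bracket_ne_zero h13
  have n14 := bracket_ne_zero h14
  have n23 := bracket_ne_zero h23
  have n24 := bracket_ne_zero h24
  have n34 := bracket_ne_zero h34
  generalize bracket z0 z1 = b01 at *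
  generalize bracket z0 z2 = b02 at *
  generalize bracket z0 z3 = b03 at *
  generalize bracket z0 z4 = b04 at *
  generalize bracket z1 z2 = b12 at *
  generalize bracket z1 z3 = b13 at *
  generalize bracket z1 z4 = b14 at *
  generalize bracket z2 z3 = b23 at *
  generalize bracket z2 z4 = b24 at *
  generalize bracket z3 z4 = b34 at *
  have hx : 1 - b02 * b13 / (b03 * b12) = -(b01 * b23 / (b03 * b12)) := by
    field_simp
    linear_combination p1
  have hy : 1 - b02 * b14 / (b04 * b12) = -(b01 * b24 / (b04 * b12)) := by
    field_simp
    linear_combination p2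
  have hxy : b02 * b13 / (b03 * b12) - b02 * b14 / (b04 * b12) =
      -(b02 * b01 * b34 / (b03 * b04 * b12)) := by
    field_simp
    linear_combination p3
  refine ⟨b02 * b13 / (b03 * b12), b02 * b14 / (b04 * b12), by positivity, ?_, by positivity, ?_,
    ?_, ?_, ?_, ?_, rfl, rfl⟩
  · rw [ne_comm, ← sub_ne_zero, hx]
    exact neg_ne_zero.2 (by positivity)
  · rw [ne_comm, ← sub_ne_zero, hy]
    exact neg_ne_zero.2 (by positivity)
  · rw [← sub_ne_zero, hxy]
    exact neg_ne_zero.2 (by positivity)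
  · rw [hx, hy]
    field_simp
  · rw [hx, hy]
    field_simp
  · field_simp

/-- The five-term expression of a function `φ` on `E`, evaluated on the configuration
`(∞, 0, 1, x, y)`. -/
def fiveTerm {M : Type*} [AddCommGroup M] (φ : E → M) (x y : E) : M :=
  φ (x * (1 - y) / (y * (1 - x))) - φ ((1 - y) / (1 - x)) + φ (y / x) - φ y + φ x

end CrossRatio

section B2Basic

variable {E : Type*} [Field E]

lemma sum_succAbove_five {α M : Type*} [AddCommGroup M] [Module ℚ M] (Φ : α → α → α → α → M)
    (z : Fin 5 → α) :
    ∑ i : Fin 5, (-1 : ℚ) ^ (i : ℕ) • Φ (z (i.succAbove 0)) (z (i.succAbove 1))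
      (z (i.succAbove 2)) (z (i.succAbove 3)) =
    Φ (z 1) (z 2) (z 3) (z 4) - Φ (z 0) (z 2) (z 3) (z 4) + Φ (z 0) (z 1) (z 3) (z 4) -
      Φ (z 0) (z 1) (z 2) (z 4) + Φ (z 0) (z 1) (z 2) (z 3) := by
  rw [Fin.sum_univ_five]
  change (-1 : ℚ) ^ 0 • Φ (z 1) (z 2) (z 3) (z 4) + (-1 : ℚ) ^ 1 • Φ (z 0) (z 2) (z 3) (z 4) +
    (-1 : ℚ) ^ 2 • Φ (z 0) (z 1) (z 3) (z 4) + (-1 : ℚ) ^ 3 • Φ (z 0) (z 1) (z 2) (z 4) +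
    (-1 : ℚ) ^ 4 • Φ (z 0) (z 1) (z 2) (z 3) = _
  module

lemma B2sym_zero : B2sym (0 : E) = 0 :=
  (Submodule.Quotient.mk_eq_zero _).2 (Submodule.subset_span (by simp))

lemma B2sym_one : B2sym (1 : E) = 0 :=
  (Submodule.Quotient.mk_eq_zero _).2 (Submodule.subset_span (by simp))

/-- A function on `E` killing `0`, `1` and all five-term expressions factors through `B₂(E)`. -/
lemma B2_exists_lift {M : Type*} [AddCommGroup M] [Module ℚ M] (φ : E → M) (h0 : φ 0 = 0)
    (h1 : φ 1 = 0)
    (h5 : ∀ x y : E, x ≠ 0 → x ≠ 1 → y ≠ 0 → y ≠ 1 → x ≠ y → fiveTerm φ x y = 0) :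
    ∃ f : B2 E →ₗ[ℚ] M, ∀ x, f (B2sym x) = φ x := by
  let g : (Option E →₀ ℚ) →ₗ[ℚ] M :=
    Finsupp.linearCombination ℚ (fun p : Option E => p.elim 0 φ)
  have hg : ∀ p : Option E, g (Finsupp.single p 1) = p.elim 0 φ := fun p => by
    simp [g]
  have hle : fiveTermRel E ≤ LinearMap.ker g := by
    refine Submodule.span_le.2 ?_
    rintro w (hw | ⟨z, hz, rfl⟩)
    · rcases hw with rfl | rfl | rfl <;> simp [hg, h0, h1]
    · obtain ⟨x, y, hx, hx1, hy, hy1, hxy, e0, e1, e2, e3, e4⟩ :=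
        crP_param (z 0) (z 1) (z 2) (z 3) (z 4) (hz _ _ (by decide)) (hz _ _ (by decide))
          (hz _ _ (by decide)) (hz _ _ (by decide)) (hz _ _ (by decide)) (hz _ _ (by decide))
          (hz _ _ (by decide)) (hz _ _ (by decide)) (hz _ _ (by decide)) (hz _ _ (by decide))
      have := h5 x y hx hx1 hy hy1 hxy
      rw [fiveTerm, ← e0, ← e1, ← e2, ← e3, ← e4] at this
      rw [SetLike.mem_coe, LinearMap.mem_ker, map_sum, ← this]
      simp only [map_smul, hg, Option.elim]
      exact sum_succAbove_five (fun p q r s => φ (crP p q r s)) z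
  exact ⟨(fiveTermRel E).liftQ g hle, fun x => hg (some x)⟩

variable (E) in
/-- The quotient map from the free vector space on `P¹(E)` onto `B₂(E)`. -/
noncomputable def B2mk : (Option E →₀ ℚ) →ₗ[ℚ] B2 E := (fiveTermRel E).mkQ

lemma B2mk_single (x : E) : B2mk E (Finsupp.single (some x) 1) = B2sym x := rfl

lemma B2mk_eq_zero {w : Option E →₀ ℚ} (hw : w ∈ fiveTermRel E) : B2mk E w = 0 :=
  (Submodule.Quotient.mk_eq_zero _).2 hw

/-- The five-term relation in `B₂(E)` for the configuration `(∞, 0, 1, x, y)`. -/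
lemma B2sym_fiveTerm {x y : E} (hx : x ≠ 0) (hx1 : x ≠ 1) (hy : y ≠ 0) (hy1 : y ≠ 1)
    (hxy : x ≠ y) : fiveTerm B2sym x y = 0 := by
  refine Eq.trans ?_ (B2mk_eq_zero
    (Submodule.subset_span (Or.inr ⟨![none, some 0, some 1, some x, some y], ?_, rfl⟩)))
  · rw [map_sum]
    simp only [map_smul, B2mk_single]
    rw [sum_succAbove_five (fun p q r s => B2sym (crP p q r s))]
    change _ = B2sym ((0 - x) * (1 - y) / ((0 - y) * (1 - x))) - B2sym ((1 - y) / (1 - x)) +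
      B2sym ((0 - y) / (0 - x)) - B2sym ((0 - y) / (0 - 1)) + B2sym ((0 - x) / (0 - 1))
    simp only [zero_sub, neg_mul, neg_div_neg_eq, div_one]
    rfl
  · intro i j hij
    fin_cases i <;> fin_cases j <;> simp_all [eq_comm]

end B2Basic

/-! ### Inversion and reflection in the Bloch group -/

section B2Symmetry

variable {E : Type*} [Field E]

/-- The difference of the five-term relations for `(∞, 0, 1, x, y)` and `(∞, 0, 1, y, x)`, written in
terms of `r = y / x` and `s = (1 - y) / (1 - x)`; the terms in `x` and `y` themselves cancel. -/
lemma B2sym_add_inv_div {r s : E} (hr : r ≠ 0) (hr1 : r ≠ 1) (hs : s ≠ 0) (hs1 : s ≠ 1)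
    (hrs : r ≠ s) :
    B2sym (s / r) + B2sym (s / r)⁻¹ =
      (B2sym s + B2sym s⁻¹) - (B2sym r + B2sym r⁻¹) := by
  have d : r - s ≠ 0 := sub_ne_zero.2 hrs
  have ds : 1 - s ≠ 0 := sub_ne_zero.2 hs1.symm
  have dr : r - 1 ≠ 0 := sub_ne_zero.2 hr1
  -- the configuration with `y / x = r` and `(1 - y) / (1 - x) = s`
  obtain ⟨x, hx⟩ : ∃ x, x = (1 - s) / (r - s) := ⟨_, rfl⟩
  obtain ⟨y, hy⟩ : ∃ y, y = r * (1 - s) / (r - s) := ⟨_, rfl⟩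
  have ex : 1 - x = (r - 1) / (r - s) := by rw [hx]; field_simp; ring
  have ey : 1 - y = s * (r - 1) / (r - s) := by rw [hy]; field_simp; ring
  have exy : y - x = (r - 1) * (1 - s) / (r - s) := by rw [hy, hx]; field_simp
  have x0 : x ≠ 0 := by rw [hx]; positivity
  have y0 : y ≠ 0 := by rw [hy]; positivity
  have x1 : 1 - x ≠ 0 := by rw [ex]; positivity
  have y1 : 1 - y ≠ 0 := by rw [ey]; positivity
  have xy : y - x ≠ 0 := by rw [exy]; positivity
  have R := B2sym_fiveTerm x0 (sub_ne_zero.1 x1).symm y0 (sub_ne_zero.1 y1).symm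
    (sub_ne_zero.1 xy).symm
  have R' := B2sym_fiveTerm y0 (sub_ne_zero.1 y1).symm x0 (sub_ne_zero.1 x1).symm
    (sub_ne_zero.1 xy)
  have e1 : x * (1 - y) / (y * (1 - x)) = s / r := by rw [ex, ey, hx, hy]; field_simp
  have e2 : (1 - y) / (1 - x) = s := by rw [ex, ey]; field_simp
  have e3 : y / x = r := by rw [hx, hy]; field_simp
  have e1' : y * (1 - x) / (x * (1 - y)) = (s / r)⁻¹ := by rw [← e1, inv_div]
  have e2' : (1 - x) / (1 - y) = s⁻¹ := by rw [← e2, inv_div]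
  have e3' : x / y = r⁻¹ := by rw [← e3, inv_div]
  rw [fiveTerm, e1, e2, e3] at R
  rw [fiveTerm, e1', e2', e3'] at R'
  linear_combination (norm := module) R + R'

/-- `{x⁻¹}₂ = -{x}₂`. With `I(x) = {x}₂ + {x⁻¹}₂`, antisymmetry of the five-term relation gives
`I(s/r) = I(s) - I(r)`, whereas `I(s/r) = I(r/s)`. -/
lemma B2sym_inv [Infinite E] (x : E) : B2sym x⁻¹ = -B2sym x := by
  by_cases hx : x = 0
  · simp [hx, B2sym_zero]
  by_cases hx1 : x = 1
  · simp [hx1, B2sym_one]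
  classical
  obtain ⟨r, hr⟩ := Infinite.exists_notMem_finset ({0, 1, x⁻¹} : Finset E)
  simp only [Finset.mem_insert, Finset.mem_singleton, not_or] at hr
  obtain ⟨r0, r1, rx⟩ := hr
  have s0 : x * r ≠ 0 := mul_ne_zero hx r0
  have s1 : x * r ≠ 1 := fun h => rx (eq_inv_of_mul_eq_one_right h)
  have rs : r ≠ x * r := fun h => hx1 (mul_right_cancel₀ r0 (h.symm.trans (one_mul r).symm))
  have A := B2sym_add_inv_div r0 r1 s0 s1 rs
  have B := B2sym_add_inv_div s0 s1 r0 r1 rs.symm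
  rw [mul_div_cancel_right₀ _ r0] at A
  rw [← inv_div, mul_div_cancel_right₀ _ r0, inv_inv] at B
  have C : (2 : ℚ) • (B2sym x⁻¹ + B2sym x) = 0 := by
    linear_combination (norm := module) A + B
  exact eq_neg_of_add_eq_zero_left ((smul_eq_zero.1 C).resolve_left two_ne_zero)

/-- `{1 - x}₂ = -{x}₂`: comparing the five-term relations for `(x, y)` and `(1 - x, 1 - y)` shows
that `{x}₂ + {1 - x}₂` is a constant, and inversion forces three times this constant to vanish. -/
lemma B2sym_one_sub [Infinite E] (x : E) : B2sym (1 - x) = -B2sym x := by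
  have J : ∀ {x y : E}, x ≠ 0 → x ≠ 1 → y ≠ 0 → y ≠ 1 →
      B2sym x + B2sym (1 - x) = B2sym y + B2sym (1 - y) := by
    intro x y x0 x1 y0 y1
    rcases eq_or_ne x y with rfl | xy
    · rfl
    have R := B2sym_fiveTerm x0 x1 y0 y1 xy
    have R' := B2sym_fiveTerm (x := 1 - x) (y := 1 - y) (sub_ne_zero.2 x1.symm)
      (fun h => x0 (by linear_combination -h)) (sub_ne_zero.2 y1.symm)
      (fun h => y0 (by linear_combination -h)) (fun h => xy (by linear_combination -h))
    have e : (1 - x) * (1 - (1 - y)) / ((1 - y) * (1 - (1 - x))) =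
        (x * (1 - y) / (y * (1 - x)))⁻¹ := by
      rw [inv_div, sub_sub_cancel, sub_sub_cancel]; ring
    rw [fiveTerm, e, B2sym_inv, sub_sub_cancel, sub_sub_cancel] at R'
    rw [fiveTerm] at R
    linear_combination (norm := module) R + R'
  by_cases hx : x = 0
  · simp [hx, B2sym_zero, B2sym_one]
  by_cases hx1 : x = 1
  · simp [hx1, B2sym_zero, B2sym_one]
  have h1 : 1 - x ≠ 0 := sub_ne_zero.2 (Ne.symm hx1)
  have A : B2sym x⁻¹ + B2sym (1 - x⁻¹) = B2sym x + B2sym (1 - x) :=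
    J (inv_ne_zero hx) (by simpa using hx1) hx hx1
  have B : B2sym (1 - x)⁻¹ + B2sym (1 - (1 - x)⁻¹) = B2sym x + B2sym (1 - x) :=
    J (inv_ne_zero h1) (by simpa using hx) hx hx1
  have e : 1 - (1 - x)⁻¹ = (1 - x⁻¹)⁻¹ := by
    have h2 : x - 1 ≠ 0 := sub_ne_zero.2 hx1
    have h3 : 1 - x⁻¹ = (x - 1) / x := by field_simp
    rw [h3]
    field_simp
    ring
  rw [e, B2sym_inv, B2sym_inv] at B
  rw [B2sym_inv] at A
  have C : (3 : ℚ) • (B2sym (1 - x) + B2sym x) = 0 := by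
    linear_combination (norm := module) - A - B
  exact eq_neg_of_add_eq_zero_left ((smul_eq_zero.1 C).resolve_left three_ne_zero)

end B2Symmetry

/-! ### Reduction modulo a discrete valuation -/

section Reduction

variable {F K : Type*} [Field F] [Field K] (w : DVF F K)

/-- `w.Red z c`: the element `z` lies in the valuation ring and reduces to `c`.
Accordingly `w.Red z⁻¹ 0` says that `z` is `0` (by the convention `0⁻¹ = 0`) or has a pole. -/
def DVF.Red (z : F) (c : K) : Prop := (∀ u : Fˣ, (u : F) = z → 0 ≤ w.v u) ∧ w.res z = c

namespace DVF

variable {w}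

lemma v_one : w.v 1 = 0 := by
  have := w.v_mul 1 1
  rw [mul_one] at this
  omega

lemma v_inv (u : Fˣ) : w.v u⁻¹ = -w.v u := by
  have := w.v_mul u u⁻¹
  rw [mul_inv_cancel, v_one] at this
  omega

lemma v_neg_one : w.v (-1) = 0 := by
  have := w.v_mul (-1) (-1)
  rw [neg_mul_neg, one_mul, v_one] at this
  omega

lemma red_zero : w.Red 0 0 := ⟨fun u hu => absurd hu u.ne_zero, w.res_zero⟩

lemma red_one : w.Red 1 1 :=
  ⟨fun u hu => by rw [Units.val_eq_one.1 hu, v_one], w.res_one⟩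

lemma red_unit {u : Fˣ} (hu : 0 ≤ w.v u) : w.Red (u : F) (w.res u) :=
  ⟨fun u' h => by rwa [Units.ext h], rfl⟩

lemma Red.add {x y : F} {c d : K} (hx : w.Red x c) (hy : w.Red y d) : w.Red (x + y) (c + d) := by
  rcases eq_or_ne x 0 with rfl | x0
  · have : c = 0 := by rw [← hx.2, w.res_zero]
    simpa [this] using hy
  rcases eq_or_ne y 0 with rfl | y0
  · have : d = 0 := by rw [← hy.2, w.res_zero]
    simpa [this] using hx
  have h1 := hx.1 (Units.mk0 x x0) rfl
  have h2 := hy.1 (Units.mk0 y y0) rfl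
  refine ⟨fun u hu => ?_, ?_⟩
  · exact (le_min h1 h2).trans (w.v_min (Units.mk0 x x0) (Units.mk0 y y0) u hu)
  · rw [← hx.2, ← hy.2]
    exact w.res_add _ _ h1 h2

lemma Red.mul {x y : F} {c d : K} (hx : w.Red x c) (hy : w.Red y d) : w.Red (x * y) (c * d) := by
  rcases eq_or_ne x 0 with rfl | x0
  · have : c = 0 := by rw [← hx.2, w.res_zero]
    simpa [this] using red_zero
  rcases eq_or_ne y 0 with rfl | y0
  · have : d = 0 := by rw [← hy.2, w.res_zero]
    simpa [this] using red_zero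
  have h1 := hx.1 (Units.mk0 x x0) rfl
  have h2 := hy.1 (Units.mk0 y y0) rfl
  refine ⟨fun u hu => ?_, ?_⟩
  · have : u = Units.mk0 x x0 * Units.mk0 y y0 := Units.ext hu
    rw [this, w.v_mul]
    exact add_nonneg h1 h2
  · rw [← hx.2, ← hy.2]
    exact w.res_mul _ _ h1 h2

lemma red_neg_one : w.Red (-1) (-1) := by
  have h1 : w.Red ((-1 : Fˣ) : F) (w.res ((-1 : Fˣ) : F)) := red_unit v_neg_one.ge
  have h2 := (red_one.add h1).2
  rw [Units.val_neg, Units.val_one, add_neg_cancel, w.res_zero] at h2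
  rw [Units.val_neg, Units.val_one] at h1
  rwa [eq_neg_of_add_eq_zero_right h2.symm] at h1

lemma Red.sub {x y : F} {c d : K} (hx : w.Red x c) (hy : w.Red y d) : w.Red (x - y) (c - d) := by
  simpa [sub_eq_add_neg] using hx.add (red_neg_one.mul hy)

lemma Red.v_eq_zero {u : Fˣ} {c : K} (hu : w.Red (u : F) c) (hc : c ≠ 0) : w.v u = 0 := by
  refine le_antisymm (not_lt.1 fun h => hc ?_) (hu.1 u rfl)
  rw [← hu.2, w.res_vanish u h]

lemma Red.ne_zero {x : F} {c : K} (hx : w.Red x c) (hc : c ≠ 0) : x ≠ 0 := by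
  rintro rfl
  exact hc (by rw [← hx.2, w.res_zero])

lemma Red.inv {x : F} {c : K} (hx : w.Red x c) (hc : c ≠ 0) : w.Red x⁻¹ c⁻¹ := by
  have x0 := hx.ne_zero hc
  have hv : w.v (Units.mk0 x x0) = 0 := Red.v_eq_zero (c := c) hx hc
  have h1 : w.Red x⁻¹ (w.res x⁻¹) := by
    have := red_unit (w := w) (u := (Units.mk0 x x0)⁻¹) (by rw [v_inv, hv, neg_zero])
    simpa using this
  have h2 := (hx.mul h1).2
  rw [mul_inv_cancel₀ x0, w.res_one] at h2
  rwa [eq_inv_of_mul_eq_one_right h2.symm] at h1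

lemma Red.div {x y : F} {c d : K} (hx : w.Red x c) (hy : w.Red y d) (hd : d ≠ 0) :
    w.Red (x / y) (c / d) := by
  simpa [div_eq_mul_inv] using hx.mul (hy.inv hd)

lemma red_of_pos {u : Fˣ} (hu : 0 < w.v u) : w.Red (u : F) 0 := by
  simpa [w.res_vanish u hu] using red_unit hu.le

lemma red_or_red_inv (z : F) : (∃ c, w.Red z c) ∨ w.Red z⁻¹ 0 := by
  rcases eq_or_ne z 0 with rfl | z0
  · exact Or.inl ⟨0, red_zero⟩
  rcases le_or_gt 0 (w.v (Units.mk0 z z0)) with h | h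
  · exact Or.inl ⟨_, red_unit h⟩
  · refine Or.inr ?_
    simpa using red_of_pos (w := w) (u := (Units.mk0 z z0)⁻¹) (by rw [v_inv]; omega)

lemma Red.res_of_inv {z : F} (hz : w.Red z⁻¹ 0) : w.res z = 0 := by
  rcases eq_or_ne z 0 with rfl | z0
  · exact w.res_zero
  have h1 : 0 ≤ w.v (Units.mk0 z z0)⁻¹ := hz.1 _ (by simp)
  rw [v_inv] at h1
  rcases h1.eq_or_lt with h | h
  · refine absurd hz.2 ?_
    simpa using w.res_unit (Units.mk0 z z0)⁻¹ (by rw [v_inv, ← h])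
  · exact w.res_junk (Units.mk0 z z0) (by omega)

end DVF

end Reduction

/-! ### Specialization of five-term relations -/

section Specialization

variable {F K : Type*} [Field F] [Field K] (w : DVF F K)

/-- The specialization `{z}₂ ↦ {z̄}₂` at the level of symbols. Since `res` vanishes on elements with
a pole and `{0}₂ = 0`, it kills every `z` which is not a unit of the valuation ring. -/
noncomputable def DVF.spec (z : F) : B2 K := B2sym (w.res z)

namespace DVF

variable {w}

lemma Red.spec_eq {z : F} {c : K} (hz : w.Red z c) : w.spec z = B2sym c := by
  rw [spec, hz.2]

lemma Red.spec_eq_zero {z : F} (hz : w.Red z 0) : w.spec z = 0 := by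
  rw [hz.spec_eq, B2sym_zero]

lemma Red.spec_of_inv {z : F} (hz : w.Red z⁻¹ 0) : w.spec z = 0 := by
  rw [spec, hz.res_of_inv, B2sym_zero]

lemma Red.inv_inv {z : F} {c : K} (hz : w.Red z c) : w.Red z⁻¹⁻¹ c := by rwa [_root_.inv_inv]

lemma spec_mul_of_red_one (z : F) {e : F} (he : w.Red e 1) : w.spec (z * e) = w.spec z := by
  rcases w.red_or_red_inv z with ⟨c, hz⟩ | hz
  · rw [(hz.mul he).spec_eq, hz.spec_eq, mul_one]
  · have : w.Red (z * e)⁻¹ 0 := by simpa [mul_inv_rev] using (he.inv one_ne_zero).mul hz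
    rw [this.spec_of_inv, hz.spec_of_inv]

variable [Infinite K]

lemma spec_inv (z : F) : w.spec z⁻¹ = -w.spec z := by
  rcases w.red_or_red_inv z with ⟨c, hz⟩ | hz
  · rcases eq_or_ne c 0 with rfl | hc
    · rw [hz.spec_eq_zero, hz.inv_inv.spec_of_inv, neg_zero]
    · rw [(hz.inv hc).spec_eq, hz.spec_eq, B2sym_inv]
  · rw [hz.spec_eq_zero, hz.spec_of_inv, neg_zero]

lemma spec_one_sub {z : F} (z0 : z ≠ 0) : w.spec (1 - z) = -w.spec z := by
  rcases w.red_or_red_inv z with ⟨c, hz⟩ | hz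
  · rw [(red_one.sub hz).spec_eq, hz.spec_eq, B2sym_one_sub]
  · have h : w.Red (z⁻¹ * (z⁻¹ - 1)⁻¹) (0 * (0 - 1)⁻¹) :=
      hz.mul ((hz.sub red_one).inv (by simp))
    have e : z⁻¹ * (z⁻¹ - 1)⁻¹ = (1 - z)⁻¹ := by
      rw [← mul_inv, mul_sub, mul_inv_cancel₀ z0, mul_one]
    rw [e, zero_mul] at h
    rw [h.spec_of_inv, hz.spec_of_inv, neg_zero]

lemma fiveTerm_spec_swap (x y : F) : fiveTerm w.spec y x = -fiveTerm w.spec x y := by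
  unfold fiveTerm
  rw [← inv_div, spec_inv, ← inv_div (1 - y) (1 - x), spec_inv, ← inv_div y x, spec_inv]
  abel

lemma fiveTerm_spec_one_sub {x y : F} (x0 : x ≠ 0) (y0 : y ≠ 0) :
    fiveTerm w.spec (1 - x) (1 - y) = -fiveTerm w.spec x y := by
  have e : (1 - x) * (1 - (1 - y)) / ((1 - y) * (1 - (1 - x))) =
      (x * (1 - y) / (y * (1 - x)))⁻¹ := by
    rw [inv_div, sub_sub_cancel, sub_sub_cancel]; ring
  unfold fiveTerm
  rw [e, spec_inv, spec_one_sub x0, spec_one_sub y0, sub_sub_cancel, sub_sub_cancel]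
  abel

lemma fiveTerm_spec_inv {x y : F} (x0 : x ≠ 0) (x1 : x ≠ 1) (y0 : y ≠ 0) :
    fiveTerm w.spec x⁻¹ y⁻¹ = -fiveTerm w.spec x y := by
  have hx : 1 - x ≠ 0 := sub_ne_zero.2 x1.symm
  have hx' : 1 - x⁻¹ ≠ 0 := sub_ne_zero.2 (by simpa [eq_comm] using x1)
  have e1 : (1 - y⁻¹) / (1 - x⁻¹) = x * (1 - y) / (y * (1 - x)) := by
    rw [div_eq_div_iff hx' (mul_ne_zero y0 hx)]
    field_simp
    ring
  have e2 : x⁻¹ * (1 - y⁻¹) / (y⁻¹ * (1 - x⁻¹)) = (1 - y) / (1 - x) := by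
    rw [mul_div_mul_comm, e1]
    field_simp
  have e3 : y⁻¹ / x⁻¹ = (y / x)⁻¹ := by rw [inv_div_inv, inv_div]
  unfold fiveTerm
  rw [e2, e1, e3]
  simp only [spec_inv]
  abel

/-- The case of a configuration `(∞, 0, 1, x, y)` in which `x` collides with `0`. -/
lemma fiveTerm_spec_of_red_zero {x y : F} (y0 : y ≠ 0) (hx : w.Red x 0) :
    fiveTerm w.spec x y = 0 := by
  have hx1 : w.Red (1 - x) 1 := by simpa using red_one.sub hx
  unfold fiveTerm
  rw [hx.spec_eq_zero]
  rcases w.red_or_red_inv y with ⟨c, hy⟩ | hy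
  · rcases eq_or_ne c 0 with rfl | hc
    · have hy1 : w.Red (1 - y) 1 := by simpa using red_one.sub hy
      have hs : w.Red ((1 - y) / (1 - x)) 1 := by simpa using hy1.div hx1 one_ne_zero
      rw [hy.spec_eq_zero, hs.spec_eq, B2sym_one, mul_div_mul_comm, spec_mul_of_red_one _ hs,
        ← inv_div y x, spec_inv]
      abel
    · have hu : w.Red (x * (1 - y) / (y * (1 - x))) 0 := by
        simpa using (hx.mul (red_one.sub hy)).div (hy.mul hx1) (by simpa using hc)
      have hs : w.Red ((1 - y) / (1 - x)) (1 - c) := by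
        simpa using (red_one.sub hy).div hx1 one_ne_zero
      have hr : w.Red (y / x)⁻¹ 0 := by simpa using hx.div hy hc
      rw [hu.spec_eq_zero, hs.spec_eq, hr.spec_of_inv, hy.spec_eq, B2sym_one_sub]
      abel
  · have hy1 : w.Red (y⁻¹ - 1) (-1) := by simpa using hy.sub red_one
    have e : 1 - y = y * (y⁻¹ - 1) := by rw [mul_sub, mul_inv_cancel₀ y0, mul_one]
    have hu : w.Red (x * (1 - y) / (y * (1 - x))) 0 := by
      have := (hx.mul hy1).div hx1 one_ne_zero
      rw [e, mul_left_comm, mul_div_mul_left _ _ y0]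
      simpa using this
    have hs : w.Red ((1 - y) / (1 - x))⁻¹ 0 := by
      have := hy.mul (hx1.div hy1 (by simp))
      rw [inv_div, e, div_mul_eq_div_div_swap, div_eq_inv_mul _ y]
      simpa using this
    have hr : w.Red (y / x)⁻¹ 0 := by
      rw [inv_div, div_eq_mul_inv]
      simpa using hx.mul hy
    rw [hu.spec_eq_zero, hs.spec_of_inv, hr.spec_of_inv, hy.spec_of_inv]
    abel

/-- The three possible collisions of `x` with `∞, 0, 1` are exchanged by the symmetries `z ↦ 1 - z`
and `z ↦ z⁻¹`, under which the five-term expression changes sign. -/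
lemma fiveTerm_spec_of_degenerate {x y : F} (x0 : x ≠ 0) (x1 : x ≠ 1) (y0 : y ≠ 0) (y1 : y ≠ 1)
    (hx : w.Red x 0 ∨ w.Red x 1 ∨ w.Red x⁻¹ 0) : fiveTerm w.spec x y = 0 := by
  rcases hx with hx | hx | hx
  · exact fiveTerm_spec_of_red_zero y0 hx
  · rw [← neg_eq_zero, ← fiveTerm_spec_one_sub x0 y0]
    exact fiveTerm_spec_of_red_zero (sub_ne_zero.2 y1.symm)
      (by simpa using red_one.sub hx)
  · rw [← neg_eq_zero, ← fiveTerm_spec_inv x0 x1 y0]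
    exact fiveTerm_spec_of_red_zero (inv_ne_zero y0) hx

/-- Specialization carries five-term relations to relations in `B₂` of the residue field. -/
lemma fiveTerm_spec {x y : F} (x0 : x ≠ 0) (x1 : x ≠ 1) (y0 : y ≠ 0) (y1 : y ≠ 1) :
    fiveTerm w.spec x y = 0 := by
  have cases : ∀ z : F, (w.Red z 0 ∨ w.Red z 1 ∨ w.Red z⁻¹ 0) ∨
      ∃ c, c ≠ 0 ∧ c ≠ 1 ∧ w.Red z c := by
    intro z
    rcases w.red_or_red_inv z with ⟨c, hz⟩ | hz
    · rcases eq_or_ne c 0 with rfl | c0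
      · exact Or.inl (Or.inl hz)
      rcases eq_or_ne c 1 with rfl | c1
      · exact Or.inl (Or.inr (Or.inl hz))
      exact Or.inr ⟨c, c0, c1, hz⟩
    · exact Or.inl (Or.inr (Or.inr hz))
  rcases cases x with hx | ⟨c, c0, c1, hx⟩
  · exact fiveTerm_spec_of_degenerate x0 x1 y0 y1 hx
  rcases cases y with hy | ⟨d, d0, d1, hy⟩
  · rw [← neg_eq_zero, ← fiveTerm_spec_swap]
    exact fiveTerm_spec_of_degenerate y0 y1 x0 x1 hy
  have c1' : 1 - c ≠ 0 := sub_ne_zero.2 c1.symm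
  have hu := ((hx.mul (red_one.sub hy)).div (hy.mul (red_one.sub hx))
    (mul_ne_zero d0 c1')).spec_eq
  have hs := ((red_one.sub hy).div (red_one.sub hx) c1').spec_eq
  have hr := (hy.div hx c0).spec_eq
  have : fiveTerm w.spec x y = fiveTerm B2sym c d := by
    unfold fiveTerm
    rw [hu, hs, hr, hx.spec_eq, hy.spec_eq]
  rw [this]
  rcases eq_or_ne c d with rfl | cd
  · -- the points `x` and `y` collide away from `∞, 0, 1`
    unfold fiveTerm
    rw [div_self c1', div_self c0, div_self (mul_ne_zero c0 c1'), B2sym_one]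
    abel
  · exact B2sym_fiveTerm c0 c1 d0 d1 cd

end DVF

end Specialization

/-! ### The differential and the tame symbols -/

section ToQ

variable {E : Type*} [Field E]

lemma toQF_of_ne {x : E} (hx : x ≠ 0) : toQF x = toQ (Units.mk0 x hx) := dif_neg hx

lemma toQF_unit (u : Eˣ) : toQF (u : E) = toQ u := by
  rw [toQF_of_ne u.ne_zero, Units.mk0_val]

lemma toQF_zero : toQF (0 : E) = 0 := dif_pos rfl

lemma toQF_mul {x y : E} (hx : x ≠ 0) (hy : y ≠ 0) : toQF (x * y) = toQF x + toQF y := by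
  rw [toQF_of_ne hx, toQF_of_ne hy, toQF_of_ne (mul_ne_zero hx hy), toQ, toQ, toQ,
    ← TensorProduct.tmul_add, ← ofMul_mul, Units.mk0_mul]

lemma toQF_one : toQF (1 : E) = 0 := by
  simpa using toQF_mul (one_ne_zero (α := E)) one_ne_zero

lemma toQF_div {x y : E} (hx : x ≠ 0) (hy : y ≠ 0) : toQF (x / y) = toQF x - toQF y := by
  rw [eq_sub_iff_add_eq, ← toQF_mul (div_ne_zero hx hy) hy, div_mul_cancel₀ _ hy]

lemma toQF_neg (x : E) : toQF (-x) = toQF x := by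
  rcases eq_or_ne x 0 with rfl | hx
  · rw [neg_zero]
  have h : toQF (-1 : E) + toQF (-1 : E) = 0 := by
    rw [← toQF_mul (by simp) (by simp), neg_mul_neg, one_mul, toQF_one]
  have h' : toQF (-1 : E) = 0 := by
    rw [← two_smul ℚ] at h
    exact (smul_eq_zero.1 h).resolve_left two_ne_zero
  rw [neg_eq_neg_one_mul, toQF_mul (by simp) hx, h', zero_add]

lemma fw_cons {n : ℕ} (x : E) (v : Fin n → E) :
    fw (Fin.cons x v) = ExteriorAlgebra.ι ℚ (toQF x) * fw v := by
  rw [fw, ExteriorAlgebra.ιMulti_succ_apply]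
  rfl

lemma fw_pair (x y : E) :
    fw ![x, y] = ExteriorAlgebra.ι ℚ (toQF x) * ExteriorAlgebra.ι ℚ (toQF y) := by
  have : (![x, y] : Fin 2 → E) = Fin.cons x (Fin.cons y Fin.elim0) := by
    ext i; fin_cases i <;> rfl
  rw [this, fw_cons, fw_cons, fw, ExteriorAlgebra.ιMulti_zero_apply, mul_one]

end ToQ

section Delta

variable (E : Type*) [Field E]

/-- The five-term expression of `x ↦ x ∧ (1 - x)` vanishes: everything is expressed through the
classes of `x`, `1 - x`, `y`, `1 - y` and `x - y`, for which this is a formal identity. -/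
lemma fiveTerm_wedge {x y : E} (x0 : x ≠ 0) (x1 : x ≠ 1) (y0 : y ≠ 0) (y1 : y ≠ 1)
    (xy : x ≠ y) : fiveTerm (fun z : E => fw ![z, 1 - z]) x y = 0 := by
  have x1' : 1 - x ≠ 0 := sub_ne_zero.2 x1.symm
  have y1' : 1 - y ≠ 0 := sub_ne_zero.2 y1.symm
  have xy' : x - y ≠ 0 := sub_ne_zero.2 xy
  have e1 : 1 - x * (1 - y) / (y * (1 - x)) = -(x - y) / (y * (1 - x)) := by
    field_simp; ring
  have e2 : 1 - (1 - y) / (1 - x) = -(x - y) / (1 - x) := by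
    field_simp; ring
  have e3 : 1 - y / x = (x - y) / x := by field_simp
  have n : -(x - y) ≠ 0 := neg_ne_zero.2 xy'
  unfold fiveTerm
  simp only [fw_pair]
  rw [e1, e2, e3, toQF_div (mul_ne_zero x0 y1') (mul_ne_zero y0 x1'),
    toQF_div n (mul_ne_zero y0 x1'), toQF_div n x1', toQF_div y1' x1', toQF_div y0 x0,
    toQF_div xy' x0, toQF_neg, toQF_mul x0 y1', toQF_mul y0 x1']
  simp only [map_add, map_sub]
  have s : ∀ v w : QW Eˣ, ExteriorAlgebra.ι ℚ v * ExteriorAlgebra.ι ℚ w +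
      ExteriorAlgebra.ι ℚ w * ExteriorAlgebra.ι ℚ v = 0 := ExteriorAlgebra.ι_add_mul_swap
  have q : ∀ v : QW Eˣ, ExteriorAlgebra.ι ℚ v * ExteriorAlgebra.ι ℚ v = 0 :=
    ExteriorAlgebra.ι_sq_zero
  have s1 := s (toQF x) (toQF y)
  have s2 := s (toQF y) (toQF (1 - x))
  have s3 := s (toQF y) (toQF (1 - y))
  have s4 := s (toQF (1 - x)) (toQF (1 - y))
  have qA := q (toQF x)
  have qB := q (toQF (1 - x))
  have qC := q (toQF y)
  generalize ExteriorAlgebra.ι ℚ (toQF x) = A at *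
  generalize ExteriorAlgebra.ι ℚ (toQF (1 - x)) = B at *
  generalize ExteriorAlgebra.ι ℚ (toQF y) = C at *
  generalize ExteriorAlgebra.ι ℚ (toQF (1 - y)) = D at *
  generalize ExteriorAlgebra.ι ℚ (toQF (x - y)) = G at *
  simp only [mul_add, mul_sub, add_mul, sub_mul]
  linear_combination (norm := module) qA + qC + s2 - s1 - s3

/-- The differential is `f ∧ id`, where `f : B₂(E) → Λ²(Eˣ)` is induced by `x ↦ x ∧ (1 - x)`. -/
lemma exists_delta (n : ℕ) :
    ∃ δ : (B2 E ⊗[ℚ] Lambda n Eˣ) →ₗ[ℚ] Lambda (n + 2) Eˣ, IsDelta E n δ := by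
  obtain ⟨f, hf⟩ := B2_exists_lift (E := E)
    (fun z : E => wedge ![z, 1 - z])
    (Subtype.ext (by
      change fw ![(0 : E), 1 - 0] = 0
      rw [fw_pair, toQF_zero, map_zero, zero_mul]))
    (Subtype.ext (by
      change fw ![(1 : E), 1 - 1] = 0
      rw [fw_pair, toQF_one, map_zero, zero_mul]))
    (fun x y x0 x1 y0 y1 xy => Subtype.ext (fiveTerm_wedge E x0 x1 y0 y1 xy))
  have mem : ∀ (p : Lambda 2 Eˣ) (q : Lambda n Eˣ), p.amb * q.amb ∈ ⋀[ℚ]^(n + 2) (QW Eˣ) := by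
    intro p q
    rw [add_comm n 2, ExteriorAlgebra.exteriorPower, pow_add]
    exact Submodule.mul_mem_mul p.2 q.2
  let g : B2 E →ₗ[ℚ] Lambda n Eˣ →ₗ[ℚ] Lambda (n + 2) Eˣ :=
    LinearMap.mk₂ ℚ (fun p q => ⟨(f p).amb * q.amb, mem (f p) q⟩)
      (fun p p' q => Subtype.ext (by rw [map_add]; exact add_mul _ _ _))
      (fun r p q => Subtype.ext (by rw [map_smul]; exact smul_mul_assoc _ _ _))
      (fun p q q' => Subtype.ext (mul_add _ _ _))
      (fun r p q => Subtype.ext (mul_smul_comm _ _ _))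
  refine ⟨TensorProduct.lift g, fun x _ _ b => ?_⟩
  change (f (B2sym x)).amb * b.amb = _
  rw [hf]
  rfl

end Delta

section Tame

variable {F K : Type*} [Field F] [Field K] (w : DVF F K)

/-- The homomorphism `Fˣ → Kˣ`, `x ↦ res (x π^{-ν(x)})` attached to a uniformizer `π`
(the angular component). -/
noncomputable def DVF.angular (π : Fˣ) (hπ : w.v π = 1) : Fˣ →* Kˣ :=
  have hv : ∀ x : Fˣ, w.v (x * π ^ (-w.v x)) = 0 := by
    have hp : ∀ n : ℕ, w.v (π ^ n) = n := by
      intro n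
      induction n with
      | zero => rw [pow_zero, DVF.v_one, Nat.cast_zero]
      | succ n ih => rw [pow_succ, w.v_mul, ih, hπ, Nat.cast_succ]
    have hz : ∀ n : ℤ, w.v (π ^ n) = n := by
      rintro (n | n)
      · simp [hp]
      · rw [zpow_negSucc, DVF.v_inv, hp]
        rfl
    intro x
    rw [w.v_mul, hz]
    omega
  { toFun := fun x => Units.mk0 (w.res (x * π ^ (-w.v x) : Fˣ)) (w.res_unit _ (hv x))
    map_one' := by
      ext
      simp [DVF.v_one, w.res_one]
    map_mul' := fun x y => by
      ext
      have e : x * y * π ^ (-w.v (x * y)) = x * π ^ (-w.v x) * (y * π ^ (-w.v y)) := by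
        rw [w.v_mul, neg_add, zpow_add]
        exact mul_mul_mul_comm _ _ _ _
      change w.res ((x * y * π ^ (-w.v (x * y)) : Fˣ) : F) =
        w.res ((x * π ^ (-w.v x) : Fˣ) : F) * w.res ((y * π ^ (-w.v y) : Fˣ) : F)
      rw [e, ← w.res_mul _ _ (hv x).ge (hv y).ge, ← Units.val_mul] }

lemma DVF.angular_apply (π : Fˣ) (hπ : w.v π = 1) {u : Fˣ} (hu : w.v u = 0) :
    ((w.angular π hπ u : Kˣ) : K) = w.res u := by
  simp [angular, hu]

/-- The valuation as a linear form on `Fˣ ⊗ ℚ`. -/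
noncomputable def DVF.valQ : QW Fˣ →ₗ[ℚ] ℚ :=
  TensorProduct.AlgebraTensorModule.lift
    ((LinearMap.toSpanSingleton ℚ (Additive Fˣ →ₗ[ℤ] ℚ)
      (AddMonoidHom.mk' (fun x : Additive Fˣ => (w.v x.toMul : ℚ)) (fun x y => by
        simp [w.v_mul])).toIntLinearMap))

lemma DVF.valQ_toQF (u : Fˣ) : w.valQ (toQF (u : F)) = w.v u := by
  rw [toQF_unit]
  simp [valQ, toQ]

/-- The tame symbol is the contraction with the valuation followed by the map induced by the angular
component. It does not depend on the chosen uniformizer, since its defining formula only involves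
angular components of units, which are their residues. -/
lemma exists_tame (n : ℕ) :
    ∃ D : Lambda (n + 1) Fˣ →ₗ[ℚ] Lambda n Kˣ, IsTameSymbol w n D := by
  obtain ⟨π, hπ⟩ := w.v_surj 1
  let s := lamMap (w.angular π hπ)
  let ctr : ExteriorAlgebra ℚ (QW Fˣ) →ₗ[ℚ] ExteriorAlgebra ℚ (QW Fˣ) :=
    CliffordAlgebra.contractLeft (Q := (0 : QuadraticForm ℚ (QW Fˣ))) w.valQ
  have ctr_mul : ∀ a b, ctr (ExteriorAlgebra.ι ℚ a * b) =
      w.valQ a • b - ExteriorAlgebra.ι ℚ a * ctr b :=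
    fun a b => CliffordAlgebra.contractLeft_ι_mul _ _ _
  have ctr_mem : ∀ n, ∀ b ∈ ⋀[ℚ]^(n + 1) (QW Fˣ), ctr b ∈ ⋀[ℚ]^n (QW Fˣ) := by
    intro n
    induction n with
    | zero =>
      intro b hb
      rw [ExteriorAlgebra.exteriorPower, zero_add, pow_one] at hb
      obtain ⟨a, rfl⟩ := hb
      rw [ExteriorAlgebra.exteriorPower, pow_zero]
      exact Submodule.mem_one.2 ⟨w.valQ a, (CliffordAlgebra.contractLeft_ι (Q := (0 : QuadraticForm ℚ (QW Fˣ)))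
        w.valQ a).symm⟩
    | succ n ih =>
      intro b hb
      rw [ExteriorAlgebra.exteriorPower, pow_succ'] at hb
      induction hb using Submodule.mul_induction_on' with
      | mem_mul_mem m hm b hb =>
        obtain ⟨a, rfl⟩ := hm
        rw [ctr_mul]
        refine Submodule.sub_mem _ (Submodule.smul_mem _ _ hb) ?_
        rw [ExteriorAlgebra.exteriorPower, pow_succ']
        exact Submodule.mul_mem_mul ⟨a, rfl⟩ (ih b hb)
      | add p _ q _ hp hq =>
        rw [map_add]
        exact Submodule.add_mem _ hp hq
  have s_mem : ∀ n, ∀ b ∈ ⋀[ℚ]^n (QW Fˣ), s b ∈ ⋀[ℚ]^n (QW Kˣ) := by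
    intro n b hb
    rw [← ExteriorAlgebra.ιMulti_span_fixedDegree] at hb
    induction hb using Submodule.span_induction with
    | mem x hx =>
      obtain ⟨v, rfl⟩ := hx
      change ExteriorAlgebra.map _ _ ∈ _
      rw [ExteriorAlgebra.map_apply_ιMulti]
      exact ExteriorAlgebra.ιMulti_range ℚ n (Set.mem_range_self _)
    | zero => rw [map_zero]; exact Submodule.zero_mem _
    | add x y _ _ hx hy => rw [map_add]; exact Submodule.add_mem _ hx hy
    | smul r x _ hx => rw [map_smul]; exact Submodule.smul_mem _ _ hx
  refine ⟨LinearMap.restrict (s.toLinearMap ∘ₗ ctr)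
    (fun b hb => s_mem n _ (ctr_mem n b hb)), fun x u hu => Subtype.ext ?_⟩
  change s (ctr (fw (Fin.cons (x : F) fun i => (u i : F)))) =
    (w.v x : ℚ) • fw (fun i => w.res (u i : F))
  have ctr_unit : ∀ (n : ℕ) (u : Fin n → Fˣ), (∀ i, w.v (u i) = 0) →
      ctr (fw fun i => (u i : F)) = 0 := by
    intro n
    induction n with
    | zero =>
      intro u _
      rw [fw, ExteriorAlgebra.ιMulti_zero_apply]
      exact CliffordAlgebra.contractLeft_one (Q := (0 : QuadraticForm ℚ (QW Fˣ))) w.valQ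
    | succ n ih =>
      intro u hu
      have e : (fun i => (u i : F)) = Fin.cons (u 0 : F) (fun i => (u i.succ : F)) := by
        ext i
        refine Fin.cases ?_ (fun j => ?_) i <;> simp
      rw [e, fw_cons, ctr_mul, ih _ (fun i => hu i.succ), w.valQ_toQF, hu 0]
      simp
  rw [fw_cons, ctr_mul, ctr_unit n u hu, mul_zero, sub_zero, w.valQ_toQF, map_smul]
  congr 1
  change ExteriorAlgebra.map _ _ = _
  rw [fw, ExteriorAlgebra.map_apply_ιMulti, fw]
  congr 1
  funext i
  have e : w.res (u i : F) = ((w.angular π hπ (u i) : Kˣ) : K) :=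
    (w.angular_apply π hπ (hu i)).symm
  rw [e, toQF_unit, Function.comp_apply, toQF_unit]
  rfl

/-- The tame symbol on `B₂(F) ⊗ Λ^{n+1}` is the tensor product of specialization and
`-∂_ν`. The formula on `{z}₂ ⊗ b` holds for every `z`: off the units `res z = 0`. -/
lemma exists_tameB [Infinite K] (n : ℕ) (D : Lambda (n + 1) Fˣ →ₗ[ℚ] Lambda n Kˣ) :
    ∃ DB : (B2 F ⊗[ℚ] Lambda (n + 1) Fˣ) →ₗ[ℚ] (B2 K ⊗[ℚ] Lambda n Kˣ),
      IsTameSymbolB w n D DB ∧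
      ∀ z b, DB (B2sym z ⊗ₜ b) = -(B2sym (w.res z) ⊗ₜ D b) := by
  obtain ⟨f, hf⟩ := B2_exists_lift (E := F) w.spec
    (by rw [DVF.spec, w.res_zero, B2sym_zero]) (by rw [DVF.spec, w.res_one, B2sym_one])
    (fun x y x0 x1 y0 y1 _ => DVF.fiveTerm_spec x0 x1 y0 y1)
  have key : ∀ z b, (-TensorProduct.map f D) (B2sym z ⊗ₜ b) = -(B2sym (w.res z) ⊗ₜ D b) := by
    intro z b
    rw [LinearMap.neg_apply, TensorProduct.map_tmul, hf, DVF.spec]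
  refine ⟨-TensorProduct.map f D, ⟨fun a _ ha b => ?_, fun u _ b => key u b⟩, key⟩
  have : w.res (a : F) = 0 := by
    rcases lt_or_gt_of_ne ha with h | h
    · exact w.res_junk a h
    · exact w.res_vanish a h
  rw [key, this, B2sym_zero, TensorProduct.zero_tmul, neg_zero]

end Tame

/-! ### Valuations of the rational function field -/

section Points

open Polynomial

variable {K : Type*} [Field K]

/-- The order of vanishing at `a` of a nonzero rational function. -/
noncomputable def ratOrd (a : K) (u : (RatFunc K)ˣ) : ℤ :=
  (rootMultiplicity a (u : RatFunc K).num : ℤ) - rootMultiplicity a (u : RatFunc K).denom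

/-- The order of vanishing may be computed from any presentation as a fraction. -/
lemma ratOrd_eq (a : K) (u : (RatFunc K)ˣ) {p q : K[X]} (hp : p ≠ 0) (hq : q ≠ 0)
    (h : (u : RatFunc K) = algebraMap K[X] (RatFunc K) p / algebraMap K[X] (RatFunc K) q) :
    ratOrd a u = (rootMultiplicity a p : ℤ) - rootMultiplicity a q := by
  have e : (u : RatFunc K).num * q = p * (u : RatFunc K).denom :=
    (RatFunc.num_mul_eq_mul_denom_iff hq).2 h
  have hn : (u : RatFunc K).num ≠ 0 := RatFunc.num_ne_zero u.ne_zero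
  have hd : (u : RatFunc K).denom ≠ 0 := RatFunc.denom_ne_zero _
  have e' := congrArg (rootMultiplicity a) e
  rw [rootMultiplicity_mul (mul_ne_zero hn hq), rootMultiplicity_mul (mul_ne_zero hp hd)] at e'
  rw [ratOrd]
  omega

lemma RatFunc.unit_eq_div (u : (RatFunc K)ˣ) : ∃ p q : K[X], p ≠ 0 ∧ q ≠ 0 ∧
    (u : RatFunc K) = algebraMap K[X] (RatFunc K) p / algebraMap K[X] (RatFunc K) q :=
  ⟨_, _, RatFunc.num_ne_zero u.ne_zero, RatFunc.denom_ne_zero _, (RatFunc.num_div_denom _).symm⟩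

lemma algebraMap_ratFunc_ne_zero {p : K[X]} (hp : p ≠ 0) : algebraMap K[X] (RatFunc K) p ≠ 0 :=
  RatFunc.algebraMap_ne_zero hp

lemma ratOrd_mul (a : K) (u v : (RatFunc K)ˣ) : ratOrd a (u * v) = ratOrd a u + ratOrd a v := by
  obtain ⟨p, q, hp, hq, hu⟩ := RatFunc.unit_eq_div u
  obtain ⟨r, s, hr, hs, hv⟩ := RatFunc.unit_eq_div v
  rw [ratOrd_eq a u hp hq hu, ratOrd_eq a v hr hs hv,
    ratOrd_eq a (u * v) (mul_ne_zero hp hr) (mul_ne_zero hq hs)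
      (by rw [Units.val_mul, hu, hv, map_mul, map_mul, div_mul_div_comm]),
    rootMultiplicity_mul (mul_ne_zero hp hr), rootMultiplicity_mul (mul_ne_zero hq hs)]
  push_cast
  ring

lemma ratOrd_min (a : K) (u v z : (RatFunc K)ˣ) (h : (z : RatFunc K) = u + v) :
    min (ratOrd a u) (ratOrd a v) ≤ ratOrd a z := by
  obtain ⟨p, q, hp, hq, hu⟩ := RatFunc.unit_eq_div u
  obtain ⟨r, s, hr, hs, hv⟩ := RatFunc.unit_eq_div v
  have hz : (z : RatFunc K) = algebraMap K[X] (RatFunc K) (p * s + q * r) /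
      algebraMap K[X] (RatFunc K) (q * s) := by
    rw [h, hu, hv, div_add_div _ _ (algebraMap_ratFunc_ne_zero hq) (algebraMap_ratFunc_ne_zero hs)]
    simp only [map_add, map_mul]
  have hn : p * s + q * r ≠ 0 := by
    intro h0
    rw [h0, map_zero, zero_div] at hz
    exact z.ne_zero hz
  rw [ratOrd_eq a u hp hq hu, ratOrd_eq a v hr hs hv, ratOrd_eq a z hn (mul_ne_zero hq hs) hz,
    rootMultiplicity_mul (mul_ne_zero hq hs)]
  have := rootMultiplicity_add a hn
  rw [rootMultiplicity_mul (mul_ne_zero hp hs), rootMultiplicity_mul (mul_ne_zero hq hr)] at this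
  push_cast
  omega

lemma ratOrd_algebraMap (a : K) (u : (RatFunc K)ˣ) {p : K[X]}
    (h : (u : RatFunc K) = algebraMap K[X] (RatFunc K) p) : ratOrd a u = rootMultiplicity a p := by
  have hp : p ≠ 0 := by
    rintro rfl
    exact u.ne_zero (by rw [h, map_zero])
  rw [ratOrd_eq a u hp one_ne_zero (by rw [h, map_one, div_one]), ← C_1, rootMultiplicity_C]
  simp

lemma ratOrd_C (a : K) (u : (RatFunc K)ˣ) {c : K} (h : (u : RatFunc K) = RatFunc.C c) :
    ratOrd a u = 0 := by
  rw [ratOrd_algebraMap a u (h.trans (RatFunc.algebraMap_C c).symm), rootMultiplicity_C,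
    Nat.cast_zero]

/-- The numerator and denominator are coprime, so they do not vanish simultaneously at `a`. -/
lemma ratOrd_nonneg_iff (a : K) (u : (RatFunc K)ˣ) :
    0 ≤ ratOrd a u ↔ eval₂ (RingHom.id K) a (u : RatFunc K).denom ≠ 0 := by
  have hn : (u : RatFunc K).num ≠ 0 := RatFunc.num_ne_zero u.ne_zero
  have hd : (u : RatFunc K).denom ≠ 0 := RatFunc.denom_ne_zero _
  have hN := rootMultiplicity_pos hn (x := a)
  have hD := rootMultiplicity_pos hd (x := a)
  have cop : ¬ (IsRoot (u : RatFunc K).num a ∧ IsRoot (u : RatFunc K).denom a) := by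
    rintro ⟨h1, h2⟩
    obtain ⟨s, t, hst⟩ := RatFunc.isCoprime_num_denom (u : RatFunc K)
    have := congrArg (eval a) hst
    rw [eval_add, eval_mul, eval_mul, h1.eq_zero, h2.eq_zero] at this
    simp at this
  rw [← eval, ratOrd]
  change _ ↔ ¬ IsRoot (u : RatFunc K).denom a
  rw [← hN, ← hD] at cop
  rw [← hD]
  omega

/-- The valuation of `K(t)` at the point `t = a` of the affine line. -/
noncomputable def pointVal (a : K) : KDVF K (RatFunc K) K where
  v := ratOrd a
  v_mul := ratOrd_mul a
  v_surj := by
    have hX : algebraMap K[X] (RatFunc K) (X - C a) ≠ 0 :=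
      algebraMap_ratFunc_ne_zero (X_sub_C_ne_zero a)
    have hn : ∀ n : ℕ, ratOrd a (Units.mk0 _ hX ^ n) = n := fun n => by
      rw [ratOrd_algebraMap a _ (p := (X - C a) ^ n) (by simp),
        rootMultiplicity_X_sub_C_pow]
    have hinv : ∀ u, ratOrd a u⁻¹ = -ratOrd a u := fun u => by
      have h1 := ratOrd_mul a u u⁻¹
      have h0 := ratOrd_C a 1 (c := 1) (by simp)
      rw [mul_inv_cancel, h0] at h1
      omega
    intro n
    obtain ⟨n, rfl | rfl⟩ := n.eq_nat_or_neg
    · exact ⟨_, hn n⟩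
    · exact ⟨_, by rw [hinv, hn n]⟩
  v_min := ratOrd_min a
  res := RatFunc.eval (RingHom.id K) a
  res_zero := RatFunc.eval_zero _ _
  res_one := RatFunc.eval_one _ _
  res_add := fun x y hx hy =>
    RatFunc.eval_add _ _ ((ratOrd_nonneg_iff a x).1 hx) ((ratOrd_nonneg_iff a y).1 hy)
  res_mul := fun x y hx hy =>
    RatFunc.eval_mul _ _ ((ratOrd_nonneg_iff a x).1 hx) ((ratOrd_nonneg_iff a y).1 hy)
  res_vanish := fun x hx => by
    have hn : (x : RatFunc K).num ≠ 0 := RatFunc.num_ne_zero x.ne_zero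
    have : IsRoot (x : RatFunc K).num a := by
      rw [← rootMultiplicity_pos hn]
      rw [ratOrd] at hx
      omega
    rw [RatFunc.eval, ← eval, this.eq_zero, zero_div]
  res_unit := fun x hx => by
    have hn : (x : RatFunc K).num ≠ 0 := RatFunc.num_ne_zero x.ne_zero
    have hd := (ratOrd_nonneg_iff a x).1 hx.ge
    have : ¬ IsRoot (x : RatFunc K).denom a := hd
    have : ¬ IsRoot (x : RatFunc K).num a := by
      rw [← rootMultiplicity_pos hn]
      have := rootMultiplicity_eq_zero this
      rw [ratOrd] at hx
      omega
    exact div_ne_zero this hd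
  res_junk := fun x hx =>
    RatFunc.eval_eq_zero_of_eval₂_denom_eq_zero
      (not_not.1 (mt (ratOrd_nonneg_iff a x).2 hx.not_ge))
  res_surj := fun c hc =>
    have h : (RatFunc.C c : RatFunc K) ≠ 0 := (_root_.map_ne_zero _).2 hc
    ⟨Units.mk0 _ h, ratOrd_C a _ rfl, RatFunc.eval_C _ _⟩
  v_triv := fun c u hu => ratOrd_C a u (by rw [hu, RatFunc.algebraMap_eq_C])
  res_alg := fun c => by rw [RatFunc.algebraMap_eq_C, RatFunc.eval_C]; rfl

lemma KDVF.red_algebraMap {F k : Type*} [Field F] [Field k] [Algebra K F] [Algebra K k]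
    (ν : KDVF K F k) (c : K) : ν.Red (algebraMap K F c) (algebraMap K k c) :=
  ⟨fun u hu => (ν.v_triv c u hu).ge, ν.res_alg c⟩

lemma KDVF.ext' {F k : Type*} [Field F] [Field k] [Algebra K F] [Algebra K k]
    {ν μ : KDVF K F k} (hv : ν.v = μ.v) (hr : ν.res = μ.res) : ν = μ := by
  obtain ⟨⟨_, _, _, _, _, _, _, _, _, _, _, _, _⟩, _, _⟩ := ν
  obtain ⟨⟨_, _, _, _, _, _, _, _, _, _, _, _, _⟩, _, _⟩ := μ
  subst hv hr
  rfl

/-- A valuation of `K(t)` at which `t - a` vanishes reduces polynomials by evaluating them. -/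
lemma KDVF.red_polynomial {a : K} (ν : KDVF K (RatFunc K) K)
    (hν : ν.Red (RatFunc.X - RatFunc.C a) 0) (p : K[X]) :
    ν.Red (algebraMap K[X] (RatFunc K) p) (p.eval a) := by
  have hC : ∀ c : K, ν.Red (RatFunc.C c : RatFunc K) c := fun c => by
    simpa [RatFunc.algebraMap_eq_C] using ν.red_algebraMap c
  have hX : ν.Red (RatFunc.X : RatFunc K) a := by
    simpa using hν.add (hC a)
  induction p using Polynomial.induction_on with
  | C c => simpa using hC c
  | add p q hp hq => simpa using hp.add hq
  | monomial n c h =>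
    have := h.mul hX
    simpa [pow_succ, mul_assoc] using this

/-- A nonzero rational function is `(t - a)ⁿ g` with `g` regular and nonvanishing at `a`; hence the
valuations of `K(t)` at which `t - a` vanishes are determined by their value on `t - a`. -/
lemma KDVF.exists_form (a : K) (π u : (RatFunc K)ˣ)
    (hπ : (π : RatFunc K) = RatFunc.X - RatFunc.C a) :
    ∃ (n : ℤ) (c : K), ∀ ν : KDVF K (RatFunc K) K, ν.Red (π : RatFunc K) 0 →
      ν.v u = n * ν.v π ∧ (n = 0 → ν.res u = c) := by
  obtain ⟨p, q, hp, hq, hu⟩ := RatFunc.unit_eq_div u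
  obtain ⟨p', hp', hpn⟩ := exists_eq_pow_rootMultiplicity_mul_and_not_dvd p hp a
  obtain ⟨q', hq', hqn⟩ := exists_eq_pow_rootMultiplicity_mul_and_not_dvd q hq a
  rw [dvd_iff_isRoot] at hpn hqn
  have p0 : algebraMap K[X] (RatFunc K) p' ≠ 0 :=
    algebraMap_ratFunc_ne_zero (by rintro rfl; simp at hpn)
  have q0 : algebraMap K[X] (RatFunc K) q' ≠ 0 :=
    algebraMap_ratFunc_ne_zero (by rintro rfl; simp at hqn)
  have hπ' : algebraMap K[X] (RatFunc K) (X - C a) = π := by rw [hπ]; simp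
  have e : u = π ^ ((rootMultiplicity a p : ℤ) - rootMultiplicity a q) *
      Units.mk0 _ (div_ne_zero p0 q0) := by
    ext
    rw [hu]
    conv_lhs => rw [hp', hq']
    simp only [map_mul, map_pow, hπ', Units.val_mul, Units.val_zpow_eq_zpow_val, Units.val_mk0]
    rw [zpow_sub₀ π.ne_zero, zpow_natCast, zpow_natCast, div_mul_div_comm]
  refine ⟨(rootMultiplicity a p : ℤ) - rootMultiplicity a q, p'.eval a / q'.eval a, fun ν hν => ?_⟩
  have hν' := hν
  rw [hπ] at hν'
  have r : ν.Red ((Units.mk0 _ (div_ne_zero p0 q0) : (RatFunc K)ˣ) : RatFunc K)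
      (p'.eval a / q'.eval a) :=
    (ν.red_polynomial hν' p').div (ν.red_polynomial hν' q') hqn
  have vz : ∀ n : ℤ, ν.v (π ^ n) = n * ν.v π := by
    let V : (RatFunc K)ˣ →* Multiplicative ℤ :=
      { toFun := fun x => Multiplicative.ofAdd (ν.v x)
        map_one' := by rw [DVF.v_one]; rfl
        map_mul' := fun x y => by rw [ν.v_mul]; rfl }
    intro n
    have := congrArg Multiplicative.toAdd (map_zpow V π n)
    simpa [V] using this
  constructor
  · conv_lhs => rw [e]
    rw [ν.v_mul, vz, r.v_eq_zero (div_ne_zero hpn hqn), add_zero]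
  · intro h0
    rw [h0, zpow_zero, one_mul] at e
    rw [e]
    exact r.2

/-- There is at most one valuation of `K(t)` over `K` at which `t - a` vanishes. -/
lemma KDVF.eq_of_red {a : K} {ν μ : KDVF K (RatFunc K) K}
    (hν : ν.Red (RatFunc.X - RatFunc.C a) 0) (hμ : μ.Red (RatFunc.X - RatFunc.C a) 0) :
    ν = μ := by
  have h0 : (RatFunc.X - RatFunc.C a : RatFunc K) ≠ 0 := by
    have := algebraMap_ratFunc_ne_zero (X_sub_C_ne_zero a)
    simpa using this
  -- surjectivity of the valuation normalizes its value on `t - a`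
  have one : ∀ ν : KDVF K (RatFunc K) K, ν.Red (RatFunc.X - RatFunc.C a) 0 →
      ν.v (Units.mk0 _ h0) = 1 := by
    intro ν hν
    obtain ⟨u, hu⟩ := ν.v_surj 1
    obtain ⟨n, c, H⟩ := KDVF.exists_form a (Units.mk0 _ h0) u rfl
    have h1 := (H ν hν).1
    rw [hu] at h1
    exact Int.eq_one_of_mul_eq_one_left (hν.1 _ rfl) h1.symm
  have key : ∀ u : (RatFunc K)ˣ, ν.v u = μ.v u ∧ ν.res u = μ.res u := by
    intro u
    obtain ⟨n, c, H⟩ := KDVF.exists_form a (Units.mk0 _ h0) u rfl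
    obtain ⟨h1, h2⟩ := H ν hν
    obtain ⟨h3, h4⟩ := H μ hμ
    rw [one ν hν, mul_one] at h1
    rw [one μ hμ, mul_one] at h3
    refine ⟨h1.trans h3.symm, ?_⟩
    rcases lt_trichotomy n 0 with hn | hn | hn
    · rw [ν.res_junk u (h1 ▸ hn), μ.res_junk u (h3 ▸ hn)]
    · rw [h2 hn, h4 hn]
    · rw [ν.res_vanish u (h1 ▸ hn), μ.res_vanish u (h3 ▸ hn)]
  refine KDVF.ext' (funext fun u => (key u).1) (funext fun z => ?_)
  rcases eq_or_ne z 0 with rfl | hz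
  · rw [ν.res_zero, μ.res_zero]
  · exact (key (Units.mk0 z hz)).2

end Points

/-- Let `K` be an algebraically closed field of characteristic `0` and
`m ≥ 2` (here `m = k+2`).  The unique lifted reciprocity map `h` on `K(t)` satisfies
`h(t ∧ (1−t) ∧ (1−a/t) ∧ c₄ ∧ … ∧ c_{m+1}) = −{a}₂ ⊗ (c₄ ∧ … ∧ c_{m+1}) mod D_m`
for all `a, c₄, …, c_{m+1} ∈ Kˣ`. -/
theorem lifted_reciprocity_on_totaro (K : Type*) [Field K] [IsAlgClosed K]
    [CharZero K] (k : ℕ)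
    (h : Lambda (k+3) (RatFunc K)ˣ →ₗ[ℚ] ((B2 K ⊗[ℚ] Lambda k Kˣ) ⧸ Dspan K k))
    (hh : IsLiftedRec K (RatFunc K) k h) (a : Kˣ) (c : Fin k → Kˣ) :
    h (wedge (Fin.cons (RatFunc.X)
        (Fin.cons (1 - RatFunc.X)
          (Fin.cons (1 - RatFunc.C (a : K) / RatFunc.X)
            (fun i => algebraMap K (RatFunc K) (c i : K)))))) =
      - Submodule.Quotient.mk (B2sym (a : K) ⊗ₜ wedge (fun i => (c i : K))) := by
  obtain ⟨δF, hδ⟩ := exists_delta (RatFunc K) (k + 1)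
  choose D hD using fun ν : KDVF K (RatFunc K) K => exists_tame ν.toDVF k
  choose DB hDB hDB' using fun ν : KDVF K (RatFunc K) K => exists_tameB ν.toDVF k (D ν)
  have a0 : (a : K) ≠ 0 := a.ne_zero
  have X1 : (RatFunc.X : RatFunc K) ≠ 1 := by
    intro h1
    have := congrArg (RatFunc.eval (RingHom.id K) 0) h1
    simp at this
  have Xa : (RatFunc.X - RatFunc.C (a : K) : RatFunc K) ≠ 0 := by
    simpa using algebraMap_ratFunc_ne_zero (Polynomial.X_sub_C_ne_zero (a : K))
  have g_eq : (1 - RatFunc.C (a : K) / RatFunc.X : RatFunc K) =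
      (RatFunc.X - RatFunc.C (a : K)) / RatFunc.X := by
    rw [sub_div, div_self RatFunc.X_ne_zero]
  have g0 : (1 - RatFunc.C (a : K) / RatFunc.X : RatFunc K) ≠ 0 := by
    rw [g_eq]
    exact div_ne_zero Xa RatFunc.X_ne_zero
  have c0 : ∀ i, algebraMap K (RatFunc K) (c i : K) ≠ 0 := fun i =>
    (map_ne_zero _).2 (c i).ne_zero
  obtain ⟨b, hb⟩ : ∃ b : Lambda (k + 1) (RatFunc K)ˣ,
      b = wedge (Fin.cons (1 - RatFunc.C (a : K) / RatFunc.X)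
        (fun i => algebraMap K (RatFunc K) (c i : K))) := ⟨_, rfl⟩
  have symbol_eq : wedge (Fin.cons (RatFunc.X)
        (Fin.cons (1 - RatFunc.X)
          (Fin.cons (1 - RatFunc.C (a : K) / RatFunc.X)
            (fun i => algebraMap K (RatFunc K) (c i : K))))) =
      δF (B2sym RatFunc.X ⊗ₜ b) := by
    apply Subtype.ext
    change fw _ = (δF (B2sym RatFunc.X ⊗ₜ b)).amb
    rw [hδ _ RatFunc.X_ne_zero X1, fw_cons, fw_cons, fw_pair, mul_assoc, hb]
    rfl
  rw [symbol_eq, hh.1 δF hδ D hD DB hDB, ← Submodule.Quotient.mk_neg]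
  congr 1
  have v_eq : ∀ ν : KDVF K (RatFunc K) K, ν.v (Units.mk0 _ g0) =
      ν.v (Units.mk0 _ Xa) - ν.v (Units.mk0 _ RatFunc.X_ne_zero) := by
    intro ν
    have e : Units.mk0 _ g0 = Units.mk0 _ Xa * (Units.mk0 _ RatFunc.X_ne_zero)⁻¹ := by
      ext
      rw [Units.val_mul, Units.val_inv_eq_inv_val, Units.val_mk0, Units.val_mk0, Units.val_mk0,
        g_eq, div_eq_mul_inv]
    rw [e, ν.v_mul, DVF.v_inv]
    rfl
  have D_eq : ∀ ν : KDVF K (RatFunc K) K,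
      D ν b = (ν.v (Units.mk0 _ g0) : ℚ) • wedge (fun i => (c i : K)) := by
    intro ν
    have := hD ν (Units.mk0 _ g0) (fun i => Units.mk0 _ (c0 i)) (fun i => ν.v_triv _ _ rfl)
    simp only [Units.val_mk0] at this
    rw [hb, this]
    simp only [ν.res_alg, Algebra.algebraMap_self, RingHom.id_apply]
  -- the summand at the point `t = a`
  have redC : ∀ ν : KDVF K (RatFunc K) K, ν.Red (RatFunc.C (a : K)) (a : K) := fun ν => by
    simpa [RatFunc.algebraMap_eq_C] using ν.red_algebraMap (a : K)
  have resX : (pointVal (a : K)).res RatFunc.X = a := RatFunc.eval_X _ _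
  have vX : (pointVal (a : K)).v (Units.mk0 _ RatFunc.X_ne_zero) = 0 := by
    by_contra hne
    have : (pointVal (a : K)).res RatFunc.X = 0 := by
      rcases lt_or_gt_of_ne hne with h1 | h1
      · exact (pointVal (a : K)).res_junk _ h1
      · exact (pointVal (a : K)).res_vanish _ h1
    exact a0 (resX.symm.trans this)
  have vXa : (pointVal (a : K)).v (Units.mk0 _ Xa) = 1 := by
    change ratOrd _ _ = 1
    rw [ratOrd_algebraMap _ _ (p := Polynomial.X - Polynomial.C (a : K)) (by simp),
      Polynomial.rootMultiplicity_X_sub_C_self, Nat.cast_one]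
  have main : DB (pointVal (a : K)) (B2sym RatFunc.X ⊗ₜ b) =
      -(B2sym (a : K) ⊗ₜ wedge (fun i => (c i : K))) := by
    rw [hDB', D_eq, v_eq, resX, vX, vXa, sub_zero, Int.cast_one, one_smul]
  -- All other summands vanish: off the zeros and poles of `t` the factor `ν(1 - a/t)` can only be
  -- nonzero at `t = a`, and at a zero or pole of `t` the class `{res t}₂` is `{0}₂`.
  rw [finsum_eq_single _ (pointVal (a : K)), main]
  intro ν hν
  rw [hDB', D_eq, v_eq]
  by_cases hX : ν.v (Units.mk0 _ RatFunc.X_ne_zero) = 0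
  · have redX : ν.Red RatFunc.X (ν.res RatFunc.X) :=
      DVF.red_unit (w := ν.toDVF) (u := Units.mk0 _ RatFunc.X_ne_zero) hX.ge
    have h1 : 0 ≤ ν.v (Units.mk0 _ Xa) := (redX.sub (redC ν)).1 _ rfl
    rcases h1.eq_or_lt with h2 | h2
    · rw [hX, ← h2, sub_zero, Int.cast_zero, zero_smul, TensorProduct.tmul_zero, neg_zero]
    · refine absurd (KDVF.eq_of_red (a := (a : K)) ?_ ?_) hν
      · exact DVF.red_of_pos h2
      · exact DVF.red_of_pos (u := Units.mk0 _ Xa) (by rw [vXa]; exact one_pos)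
  · have : ν.res RatFunc.X = 0 := by
      rcases lt_or_gt_of_ne hX with h1 | h1
      · exact ν.res_junk _ h1
      · exact ν.res_vanish _ h1
    rw [this, B2sym_zero, TensorProduct.zero_tmul, neg_zero]
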